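/- arXiv:1011.1395 — 9 statements merged into one kernel-verified Lean document; each statement's English description precedes it below -/
import Mathlib

section
/- For every integer N ≥ 1, setting θ = 2^N ∈ ℚ_2, the element θ² − 2θ − 3 is not a square in ℚ_2; consequently the quadratic equation x² + (2θ − θ² + 1)x + 1 = 0 has no solution x ∈ ℚ_2. -/
/-!
The discriminant of the quadratic is `(θ - 1) ^ 2 * ((θ - 1) ^ 2 - 4 * q)`. When `θ` is even and
`q` is a unit, `θ - 1` is a unit too, and since unit squares are `1` modulo `8`, the second factor
is `1 - 4 ≡ 5` modulo `8`, hence not the square of a `2`-adic integer. It is not the square of a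
`2`-adic number either, because `ℤ_[2]` is integrally closed.
-/

theorem isSquare_algebraMap_iff {R K : Type*} [CommRing R] [IsIntegrallyClosed R] [CommRing K]
    [Algebra R K] [IsFractionRing R K] {a : R} :
    IsSquare (algebraMap R K a) ↔ IsSquare a := by
  refine ⟨fun ⟨y, hy⟩ ↦ ?_, fun ha ↦ ha.map (algebraMap R K)⟩
  have y_sq_integral : IsIntegral R (y ^ 2) := by
    rw [sq, ← hy]
    exact isIntegral_algebraMap
  obtain ⟨w, rfl⟩ :=
    IsIntegrallyClosed.exists_algebraMap_eq_of_isIntegral_pow two_pos y_sq_integral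
  exact ⟨w, IsFractionRing.injective R K (by rw [hy, map_mul])⟩

theorem not_isSquare_sq_sub_four_mul_of_units_zmod_eight (u v : (ZMod 8)ˣ) :
    ¬ IsSquare ((u : ZMod 8) ^ 2 - 4 * v) := by
  have sq_eq_one : ∀ w : (ZMod 8)ˣ, (w : ZMod 8) ^ 2 = 1 := by decide
  have four_mul_eq_four : ∀ w : (ZMod 8)ˣ, 4 * (w : ZMod 8) = 4 := by decide
  have not_isSquare_five : ¬ IsSquare (1 - 4 : ZMod 8) := by decide
  rwa [sq_eq_one, four_mul_eq_four]

theorem not_isSquare_sq_sub_four_mul_of_units {R : Type*} [Ring R] (f : R →+* ZMod 8)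
    (u v : Rˣ) : ¬ IsSquare ((u : R) ^ 2 - 4 * v) := by
  intro h
  apply not_isSquare_sq_sub_four_mul_of_units_zmod_eight (Units.map f u) (Units.map f v)
  simpa only [map_sub, map_mul, map_pow, map_ofNat] using! h.map f

theorem not_isSquare_sq_sub_four_mul_of_norm_eq_one {u v : ℚ_[2]} (hu : ‖u‖ = 1)
    (hv : ‖v‖ = 1) : ¬ IsSquare (u ^ 2 - 4 * v) := by
  have not_isSquare_in_integers := not_isSquare_sq_sub_four_mul_of_units
    (PadicInt.toZModPow (p := 2) 3) (PadicInt.mkUnits hu) (PadicInt.mkUnits hv)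
  rwa [← isSquare_algebraMap_iff (K := ℚ_[2])] at not_isSquare_in_integers

theorem norm_sub_eq_right_of_norm_lt {E : Type*} [SeminormedAddGroup E] [IsUltrametricDist E]
    {x y : E} (h : ‖x‖ < ‖y‖) : ‖x - y‖ = ‖y‖ := by
  have norm_ne : ‖x‖ ≠ ‖-y‖ := by rw [norm_neg]; exact h.ne
  rw [sub_eq_add_neg, IsUltrametricDist.norm_add_eq_max_of_norm_ne_norm norm_ne, norm_neg,
    max_eq_right h.le]

theorem isSquare_of_quadratic_eq_zero {K : Type*} [Field K] {θ q x : K} (hθ : θ ≠ 1)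
    (hx : x ^ 2 + (2 * θ - θ ^ 2 + 2 * q - 1) * x + q ^ 2 = 0) :
    IsSquare ((θ - 1) ^ 2 - 4 * q) := by
  set b := 2 * θ - θ ^ 2 + 2 * q - 1 with hb
  have discrim_factor : discrim 1 b (q ^ 2) = (θ - 1) ^ 2 * ((θ - 1) ^ 2 - 4 * q) := by
    rw [discrim, hb]; ring
  have discrim_eq_sq : discrim 1 b (q ^ 2) = (2 * 1 * x + b) ^ 2 :=
    discrim_eq_sq_of_quadratic_eq_zero (by linear_combination hx)
  rw [← mul_div_cancel_left₀ ((θ - 1) ^ 2 - 4 * q) (pow_ne_zero 2 (sub_ne_zero.mpr hθ)),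
    ← discrim_factor, discrim_eq_sq]
  exact (IsSquare.sq _).div (IsSquare.sq _)

theorem stmt_0_general (θ q : ℚ_[2]) (hθ : ‖θ‖ < 1) (hq : ‖q‖ = 1) :
    ¬ IsSquare (θ ^ 2 - 2 * θ - 4 * q + 1) ∧
    ¬ ∃ x : ℚ_[2], x ^ 2 + (2 * θ - θ ^ 2 + 2 * q - 1) * x + q ^ 2 = 0 := by
  have norm_sub_one : ‖θ - 1‖ = 1 := by
    rw [norm_sub_eq_right_of_norm_lt (by rwa [norm_one]), norm_one]
  have not_square : ¬ IsSquare ((θ - 1) ^ 2 - 4 * q) :=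
    not_isSquare_sq_sub_four_mul_of_norm_eq_one norm_sub_one hq
  have ne_one : θ ≠ 1 := by
    rintro rfl
    exact hθ.ne norm_one
  constructor
  · convert not_square using 2
    ring
  · rintro ⟨x, hx⟩
    exact not_square (isSquare_of_quadratic_eq_zero ne_one hx)

theorem stmt_0 (N : ℕ) (hN : 1 ≤ N) (θ : ℚ_[2]) (hθ : θ = (2 : ℚ_[2]) ^ N) :
    ¬ IsSquare (θ ^ 2 - 2 * θ - 3) ∧
    ¬ ∃ x : ℚ_[2], x ^ 2 + (2 * θ - θ ^ 2 + 1) * x + 1 = 0 := by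
  have norm_lt_one : ‖θ‖ < 1 := by
    rw [hθ, norm_pow]
    exact pow_lt_one₀ (norm_nonneg _) Padic.norm_p_lt_one (by lia)
  convert stmt_0_general θ 1 norm_lt_one norm_one using 6 <;> ring
end

section
/- For every integer N ≥ 2, setting θ = 3^N ∈ ℚ_3, the element θ² − 2θ − 3 is not a square in ℚ_3; consequently the quadratic equation x² + (2θ − θ² + 1)x + 1 = 0 has no solution x ∈ ℚ_3. -/
/-!
The roots of `x² + (2θ - θ² + 2q - 1)x + q²` give the translation-invariant quasi Gibbs measures of
the `p`-adic Ising model. Its discriminant is `(θ - 1)²(θ² - 2θ - 4q + 1)`, so for `θ ≠ 1` a root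
forces the second factor to be a square. If `θ` is small compared with `1 - 4q`, this factor has the
same valuation as `1 - 4q`; for `p = 3` and `q = 1` that is the valuation of `-3`, which is odd,
whereas squares have even valuation.
-/

lemma norm_sq_sub_two_mul_le {R : Type*} [SeminormedRing R] [NormOneClass R]
    [IsUltrametricDist R] {x : R} (hx : ‖x‖ ≤ 1) : ‖x ^ 2 - 2 * x‖ ≤ ‖x‖ := by
  have htwo : ‖(-2 : R)‖ ≤ 1 := mod_cast IsUltrametricDist.norm_intCast_le_one R (-2)
  have hfactor : ‖x - 2‖ ≤ 1 := by
    rw [sub_eq_add_neg]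
    exact (IsUltrametricDist.norm_add_le_max x (-2)).trans (max_le hx htwo)
  calc ‖x ^ 2 - 2 * x‖ = ‖(x - 2) * x‖ := by rw [sub_mul, sq]
    _ ≤ ‖x - 2‖ * ‖x‖ := norm_mul_le _ _
    _ ≤ ‖x‖ := mul_le_of_le_one_left (norm_nonneg x) hfactor

section Padic

variable {p : ℕ} [Fact p.Prime] {x y : ℚ_[p]}

lemma padic_valuation_eq_of_norm_eq (h : ‖x‖ = ‖y‖) : x.valuation = y.valuation := by
  rcases eq_or_ne x 0 with rfl | hx
  · rw [norm_zero, eq_comm, norm_eq_zero] at h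
    rw [h]
  · have hy : y ≠ 0 := norm_ne_zero_iff.mp (h ▸ norm_ne_zero_iff.mpr hx)
    have hp : 1 < (p : ℝ) := mod_cast (Fact.out : p.Prime).one_lt
    rw [Padic.norm_eq_zpow_neg_valuation hx, Padic.norm_eq_zpow_neg_valuation hy] at h
    exact neg_injective (zpow_right_injective₀ (by positivity) hp.ne' h)

lemma padic_valuation_neg (x : ℚ_[p]) : (-x).valuation = x.valuation :=
  padic_valuation_eq_of_norm_eq (norm_neg x)

lemma padic_valuation_add_eq_of_norm_lt (h : ‖y‖ < ‖x‖) : (x + y).valuation = x.valuation :=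
  padic_valuation_eq_of_norm_eq <| by rw [Padic.add_eq_max_of_ne h.ne', max_eq_left h.le]

lemma even_padic_valuation_of_isSquare (hx : IsSquare x) : Even x.valuation := by
  obtain ⟨r, rfl⟩ := hx
  rw [← sq, Padic.valuation_pow]
  exact even_two_mul _

lemma not_isSquare_add_of_norm_lt_of_odd_valuation (hxy : ‖y‖ < ‖x‖) (hx : Odd x.valuation) :
    ¬ IsSquare (x + y) := fun h ↦
  Int.not_even_iff_odd.mpr hx <|
    padic_valuation_add_eq_of_norm_lt hxy ▸ even_padic_valuation_of_isSquare h

lemma padic_norm_p_pow_lt_norm_p {n : ℕ} (hn : 1 < n) : ‖(p : ℚ_[p]) ^ n‖ < ‖(p : ℚ_[p])‖ := by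
  have hp : (p : ℚ_[p]) ≠ 0 := mod_cast (Fact.out : p.Prime).ne_zero
  rw [norm_pow]
  exact pow_lt_self_of_lt_one₀ (norm_pos_iff.mpr hp) Padic.norm_p_lt_one hn

end Padic

lemma discrim_ising {R : Type*} [CommRing R] (q θ : R) :
    discrim 1 (2 * θ - θ ^ 2 + 2 * q - 1) (q ^ 2) =
      (θ - 1) ^ 2 * (θ ^ 2 - 2 * θ - 4 * q + 1) := by
  rw [discrim]
  ring

lemma isSquare_of_ising_quadratic_eq_zero {K : Type*} [Field K] {q θ x : K} (hθ : θ ≠ 1)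
    (hx : x ^ 2 + (2 * θ - θ ^ 2 + 2 * q - 1) * x + q ^ 2 = 0) :
    IsSquare (θ ^ 2 - 2 * θ - 4 * q + 1) := by
  rw [sq x, ← one_mul (x * x)] at hx
  have hdiscrim := discrim_eq_sq_of_quadratic_eq_zero hx
  rw [discrim_ising] at hdiscrim
  have hsq_ne_zero : (θ - 1) ^ 2 ≠ 0 := pow_ne_zero 2 (sub_ne_zero.mpr hθ)
  rw [eq_div_of_mul_eq hsq_ne_zero ((mul_comm _ _).trans hdiscrim)]
  exact (IsSquare.sq _).div (IsSquare.sq _)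

theorem stmt_1_general {p : ℕ} [Fact p.Prime] (q θ : ℚ_[p]) (hθ : ‖θ‖ < 1)
    (hθq : ‖θ‖ < ‖1 - 4 * q‖) (hq : Odd (1 - 4 * q).valuation) :
    ¬ IsSquare (θ ^ 2 - 2 * θ - 4 * q + 1) ∧
    ¬ ∃ x : ℚ_[p], x ^ 2 + (2 * θ - θ ^ 2 + 2 * q - 1) * x + q ^ 2 = 0 := by
  have hnsq : ¬ IsSquare (θ ^ 2 - 2 * θ - 4 * q + 1) := by
    convert not_isSquare_add_of_norm_lt_of_odd_valuation
      ((norm_sq_sub_two_mul_le hθ.le).trans_lt hθq) hq using 2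
    ring
  have hθ_ne_one : θ ≠ 1 := by
    rintro rfl
    exact hθ.ne norm_one
  exact ⟨hnsq, fun ⟨_, hx⟩ ↦ hnsq (isSquare_of_ising_quadratic_eq_zero hθ_ne_one hx)⟩

theorem stmt_1 (N : ℕ) (hN : 2 ≤ N) (θ : ℚ_[3]) (hθ : θ = (3 : ℚ_[3]) ^ N) :
    ¬ IsSquare (θ ^ 2 - 2 * θ - 3) ∧
    ¬ ∃ x : ℚ_[3], x ^ 2 + (2 * θ - θ ^ 2 + 1) * x + 1 = 0 := by
  have hq : (1 - 4 * 1 : ℚ_[3]) = -(3 : ℕ) := by norm_num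
  have hθ_lt : ‖θ‖ < ‖((3 : ℕ) : ℚ_[3])‖ := hθ ▸ padic_norm_p_pow_lt_norm_p hN
  convert stmt_1_general 1 θ (hθ_lt.trans Padic.norm_p_lt_one) (by rwa [hq, norm_neg])
    (by rw [hq, padic_valuation_neg, Padic.valuation_p]; exact odd_one) using 5 <;> ring
end

section
/- Let p ≥ 5 be a prime and N ≥ 1 an integer, and set θ = p^N ∈ ℚ_p. Then θ² − 2θ − 3 is a square in ℚ_p if and only if −3 is a square in ZMod p (i.e. −3 is a quadratic residue modulo p); equivalently, the quadratic equation x² + (2θ − θ² + 1)x + 1 = 0 has a solution in ℚ_p if and only if −3 is a square in ZMod p. -/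
/-!
Reduction modulo the maximal ideal sends `θ ^ 2 - 2 * θ - 4 * q + 1` to `1 - 4 * q`, because `θ`
lies in the maximal ideal. When `2` and `1 - 4 * q` are nonzero in the residue field, Hensel's lemma
applied to `X ^ 2 - u` makes "being a square" depend only on this residue, and integral closedness
moves the question between the ring and its fraction field. The discriminant of the quadratic is
`(θ - 1) ^ 2 * (θ ^ 2 - 2 * θ - 4 * q + 1)`, with `θ - 1` a unit.
-/

open IsLocalRing Polynomial

theorem isSquare_sq_mul_iff {G₀ : Type*} [CommGroupWithZero G₀] {a : G₀} (ha : a ≠ 0) (b : G₀) :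
    IsSquare (a ^ 2 * b) ↔ IsSquare b := by
  refine ⟨fun h ↦ ?_, (IsSquare.sq a).mul⟩
  simpa [ha] using h.div (IsSquare.sq a)

theorem exists_quadratic_eq_zero_iff_isSquare_discrim {K : Type*} [Field K] [NeZero (2 : K)]
    {a b c : K} (ha : a ≠ 0) :
    (∃ x, a * (x * x) + b * x + c = 0) ↔ IsSquare (discrim a b c) :=
  ⟨fun ⟨_, hx⟩ ↦ discrim_eq_sq_of_quadratic_eq_zero hx ▸ IsSquare.sq _,
    exists_quadratic_eq_zero ha⟩

theorem exists_ising_quadratic_eq_zero_iff_isSquare {K : Type*} [Field K] [NeZero (2 : K)]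
    {θ : K} (hθ : θ ≠ 1) (q : K) :
    (∃ x, x ^ 2 + (2 * θ - θ ^ 2 + 2 * q - 1) * x + q ^ 2 = 0) ↔
      IsSquare (θ ^ 2 - 2 * θ - 4 * q + 1) := by
  have discrim_eq : discrim 1 (2 * θ - θ ^ 2 + 2 * q - 1) (q ^ 2) =
      (θ - 1) ^ 2 * (θ ^ 2 - 2 * θ - 4 * q + 1) := by
    rw [discrim]
    ring
  rw [← isSquare_sq_mul_iff (sub_ne_zero.mpr hθ), ← discrim_eq,
    ← exists_quadratic_eq_zero_iff_isSquare_discrim one_ne_zero]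
  simp only [one_mul, sq]

theorem isSquare_algebraMap_iff_of_isIntegrallyClosed {R K : Type*} [CommRing R]
    [IsIntegrallyClosed R] [CommRing K] [Algebra R K] [IsFractionRing R K] {u : R} :
    IsSquare (algebraMap R K u) ↔ IsSquare u := by
  refine ⟨fun ⟨y, hy⟩ ↦ ?_, fun h ↦ h.map _⟩
  have hy_integral : IsIntegral R (y ^ 2) := by
    rw [sq, ← hy]
    exact isIntegral_algebraMap
  obtain ⟨w, rfl⟩ :=
    IsIntegrallyClosed.exists_algebraMap_eq_of_isIntegral_pow two_pos hy_integral
  exact ⟨w, IsFractionRing.injective R K (by rw [hy, map_mul])⟩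

theorem isSquare_map_iff_of_henselianLocalRing {R k : Type*} [CommRing R] [HenselianLocalRing R]
    [Field k] [NeZero (2 : k)] {φ : R →+* k} (hφ : Function.Surjective φ) {u : R}
    (hu : φ u ≠ 0) : IsSquare (φ u) ↔ IsSquare u := by
  refine ⟨fun ⟨r, hr⟩ ↦ ?_, fun h ↦ h.map φ⟩
  have : IsLocalHom φ := hφ.isLocalHom
  obtain ⟨a, rfl⟩ := hφ r
  have ha : φ a ≠ 0 := by
    intro h
    simp [hr, h] at hu
  have approx_root : (X ^ 2 - C u : R[X]).eval a ∈ maximalIdeal R := by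
    rw [← ker_eq_maximalIdeal φ hφ, RingHom.mem_ker]
    simp [hr, sq]
  have simple_root : IsUnit ((X ^ 2 - C u : R[X]).derivative.eval a) := by
    apply isUnit_of_map_unit φ
    have : φ (2 * a) ≠ 0 := by
      rw [map_mul, map_ofNat]
      exact mul_ne_zero two_ne_zero ha
    simpa [one_add_one_eq_two] using this
  obtain ⟨z, hz, -⟩ := HenselianLocalRing.is_henselian (X ^ 2 - C u)
    (monic_X_pow_sub_C u two_ne_zero) a approx_root simple_root
  have hz : z ^ 2 - u = 0 := by simpa using hz
  exact ⟨z, by linear_combination -hz⟩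

theorem henselianLocalRing_of_henselianRing_maximalIdeal (R : Type*) [CommRing R] [IsLocalRing R]
    [HenselianRing R (maximalIdeal R)] : HenselianLocalRing R where
  is_henselian f hf a₀ h₀ hunit :=
    HenselianRing.is_henselian f hf a₀ h₀ (hunit.map (Ideal.Quotient.mk _))

instance henselianLocalRing_padicInt (p : ℕ) [Fact p.Prime] : HenselianLocalRing ℤ_[p] :=
  henselianLocalRing_of_henselianRing_maximalIdeal ℤ_[p]

theorem stmt_2_general {R K k : Type*} [CommRing R] [HenselianLocalRing R] [IsIntegrallyClosed R]
    [Field K] [Algebra R K] [IsFractionRing R K] [Field k] [NeZero (2 : k)]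
    {φ : R →+* k} (hφ : Function.Surjective φ) {θ q : R} (hθ : φ θ = 0)
    (hq : 1 - 4 * φ q ≠ 0) {t s : K} (ht : algebraMap R K θ = t) (hs : algebraMap R K q = s) :
    (IsSquare (t ^ 2 - 2 * t - 4 * s + 1) ↔ IsSquare (1 - 4 * φ q)) ∧
    ((∃ x : K, x ^ 2 + (2 * t - t ^ 2 + 2 * s - 1) * x + s ^ 2 = 0) ↔
      IsSquare (1 - 4 * φ q)) := by
  subst ht hs
  have residue_eq : φ (θ ^ 2 - 2 * θ - 4 * q + 1) = 1 - 4 * φ q := by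
    simp only [map_add, map_sub, map_mul, map_pow, map_ofNat, map_one, hθ]
    ring
  have isSquare_iff : IsSquare (algebraMap R K θ ^ 2 - 2 * algebraMap R K θ -
      4 * algebraMap R K q + 1) ↔ IsSquare (1 - 4 * φ q) := by
    rw [← residue_eq] at hq ⊢
    rw [isSquare_map_iff_of_henselianLocalRing hφ hq,
      ← isSquare_algebraMap_iff_of_isIntegrallyClosed (R := R) (K := K)]
    simp only [map_add, map_sub, map_mul, map_pow, map_ofNat, map_one]
  have : NeZero (2 : R) := NeZero.nat_of_neZero φ
  have : NeZero (2 : K) := NeZero.nat_of_injective (IsFractionRing.injective R K)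
  have hθ_one : algebraMap R K θ ≠ 1 := fun h ↦ by
    have h1 : θ = 1 := IsFractionRing.injective R K (by simpa using h)
    simp [h1] at hθ
  exact ⟨isSquare_iff,
    (exists_ising_quadratic_eq_zero_iff_isSquare hθ_one _).trans isSquare_iff⟩

theorem stmt_2 (p : ℕ) [Fact p.Prime] (hp : 5 ≤ p) (N : ℕ) (hN : 1 ≤ N)
    (θ : ℚ_[p]) (hθ : θ = (p : ℚ_[p]) ^ N) :
    (IsSquare (θ ^ 2 - 2 * θ - 3) ↔ IsSquare (-3 : ZMod p)) ∧
    ((∃ x : ℚ_[p], x ^ 2 + (2 * θ - θ ^ 2 + 1) * x + 1 = 0) ↔ IsSquare (-3 : ZMod p)) := by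
  have : NeZero (2 : ZMod p) := ⟨mod_cast ZMod.prime_ne_zero p 2 (by lia)⟩
  have h3 : (3 : ZMod p) ≠ 0 := mod_cast ZMod.prime_ne_zero p 3 (by lia)
  have residue_eq : (1 - 4 * PadicInt.toZMod (1 : ℤ_[p]) : ZMod p) = -3 := by
    rw [map_one]
    norm_num
  have isSquare_arg_eq : θ ^ 2 - 2 * θ - 3 = θ ^ 2 - 2 * θ - 4 * 1 + 1 := by ring
  have quadratic_eq (x : ℚ_[p]) : x ^ 2 + (2 * θ - θ ^ 2 + 1) * x + 1 =
      x ^ 2 + (2 * θ - θ ^ 2 + 2 * 1 - 1) * x + 1 ^ 2 := by ring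
  simp only [isSquare_arg_eq, quadratic_eq, ← residue_eq]
  refine stmt_2_general (ZMod.ringHom_surjective PadicInt.toZMod) (θ := (p : ℤ_[p]) ^ N) ?_ ?_
    (by simp [hθ]) (map_one _)
  · simp [Nat.one_le_iff_ne_zero.mp hN]
  · rw [residue_eq]
    exact neg_ne_zero.mpr h3
end

section
/- Let p be a prime, let q ≥ 2 be an integer divisible by p, let N ≥ 1 be an integer, and set θ = p^N ∈ ℚ_p. Then θ² − 2θ − 4q + 1 is a nonzero square in ℚ_p, and consequently the quadratic equation x² + (2θ − θ² + 2q − 1)x + q² = 0 has two distinct solutions in ℚ_p. -/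
open IsLocalRing Polynomial

/-!
Put `u = θ - 1`. If `Z ^ 2 - u * Z + q` has distinct roots `z₁` and `z₂`, then
`θ ^ 2 - 2 * θ - 4 * q + 1 = u ^ 2 - 4 * q = (z₁ - z₂) ^ 2`, and the quadratic factors as
`(x - z₁ ^ 2) * (x - z₂ ^ 2)`. The substitution `Z = u * W` leads to `W ^ 2 - W + q / u ^ 2`,
whose reduction has the simple roots `0` and `1` because `q / u ^ 2` lies in the maximal ideal;
Hensel's lemma lifts them. Working with `W` rather than with a square root of `u ^ 2 - 4 * q`
avoids dividing by `2`, so residue characteristic `2` is not exceptional.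
-/

section CommRing

variable {R : Type*} [CommRing R]

theorem henselianLocalRing_of_henselianRing [IsLocalRing R] [HenselianRing R (maximalIdeal R)] :
    HenselianLocalRing R where
  is_henselian f hf a₀ hroot hunit :=
    HenselianRing.is_henselian f hf a₀ hroot (hunit.map (Ideal.Quotient.mk (maximalIdeal R)))

theorem exists_mem_maximalIdeal_sq_sub_self_add_eq_zero [HenselianLocalRing R] {c : R}
    (hc : c ∈ maximalIdeal R) : ∃ w ∈ maximalIdeal R, w ^ 2 - w + c = 0 := by
  have hmonic : (X ^ 2 - X + C c : R[X]).Monic := by monicity!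
  obtain ⟨w, hroot, hw⟩ := HenselianLocalRing.is_henselian _ hmonic 0
    (by simpa using hc) (by simp)
  exact ⟨w, by simpa using hw, by simpa using hroot⟩

end CommRing

section Valuation

theorem map_lt_map_sub_one_sq {A Γ₀ : Type*} [Ring A] [LinearOrderedCommGroupWithZero Γ₀]
    (v : Valuation A Γ₀) {x y : A} (hx : v x < 1) (hy : v y < 1) : v y < v (x - 1) ^ 2 := by
  rwa [v.map_sub_swap, v.map_one_sub_of_lt hx, one_pow]

variable {K Γ₀ R : Type*} [Field K] [LinearOrderedCommGroupWithZero Γ₀] [CommRing R]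
  [Algebra R K] {v : Valuation K Γ₀}

theorem map_lt_one_iff_mem_maximalIdeal [IsLocalRing R] (hv : v.Integers R) {x : R} :
    v (algebraMap R K x) < 1 ↔ x ∈ maximalIdeal R := by
  rw [mem_maximalIdeal, mem_nonunits_iff, hv.isUnit_iff_valuation_eq_one, lt_iff_le_and_ne,
    and_iff_right (hv.map_le_one x)]

variable [HenselianLocalRing R]

theorem exists_map_lt_sq_sub_mul_add_eq_zero (hv : v.Integers R) {u q : K} (hq : v q < v u ^ 2) :
    ∃ z, v z < v u ∧ z ^ 2 - u * z + q = 0 := by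
  have hu : u ≠ 0 := by
    rintro rfl
    simp at hq
  have hvu : 0 < v u := v.pos_iff.2 hu
  have hc : v (q / u ^ 2) < 1 := by
    rwa [map_div₀, map_pow, div_lt_one₀ (pow_pos hvu 2)]
  obtain ⟨c, hcq⟩ := hv.exists_of_le_one hc.le
  obtain ⟨w, hw, hroot⟩ := exists_mem_maximalIdeal_sq_sub_self_add_eq_zero
    ((map_lt_one_iff_mem_maximalIdeal hv).1 (hcq ▸ hc))
  have hrootK : algebraMap R K w ^ 2 - algebraMap R K w + q / u ^ 2 = 0 := by
    simpa [hcq] using congrArg (algebraMap R K) hroot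
  refine ⟨u * algebraMap R K w, ?_, ?_⟩
  · rw [map_mul]
    exact mul_lt_of_lt_one_right hvu ((map_lt_one_iff_mem_maximalIdeal hv).2 hw)
  · linear_combination u ^ 2 * hrootK - mul_div_cancel₀ q (pow_ne_zero 2 hu)

theorem exists_ne_add_eq_mul_eq (hv : v.Integers R) {u q : K} (hq : v q < v u ^ 2) :
    ∃ z₁ z₂, z₁ ≠ z₂ ∧ z₁ + z₂ = u ∧ z₁ * z₂ = q := by
  obtain ⟨z, hzu, hz⟩ := exists_map_lt_sq_sub_mul_add_eq_zero hv hq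
  refine ⟨z, u - z, fun h ↦ ?_, by ring, by linear_combination -hz⟩
  have : v (u - z) = v u := v.map_sub_eq_of_lt_left hzu
  exact hzu.ne (h ▸ this)

theorem stmt_3_general (hv : v.Integers R) {θ q : K} (hq : v q < v (θ - 1) ^ 2) :
    (θ ^ 2 - 2 * θ - 4 * q + 1 ≠ 0 ∧ IsSquare (θ ^ 2 - 2 * θ - 4 * q + 1)) ∧
    ∃ x₁ x₂ : K, x₁ ≠ x₂ ∧
      x₁ ^ 2 + (2 * θ - θ ^ 2 + 2 * q - 1) * x₁ + q ^ 2 = 0 ∧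
      x₂ ^ 2 + (2 * θ - θ ^ 2 + 2 * q - 1) * x₂ + q ^ 2 = 0 := by
  obtain ⟨z₁, z₂, hne, hadd, rfl⟩ := exists_ne_add_eq_mul_eq hv hq
  obtain rfl : θ = z₁ + z₂ + 1 := by linear_combination -hadd
  have hsub : z₁ - z₂ ≠ 0 := sub_ne_zero.2 hne
  have hsum : z₁ + z₂ ≠ 0 := by
    intro h
    simp [h] at hq
  have hsq : z₁ ^ 2 ≠ z₂ ^ 2 := by
    rw [← sub_ne_zero, sq_sub_sq]
    exact mul_ne_zero hsum hsub
  have hdisc : (z₁ + z₂ + 1) ^ 2 - 2 * (z₁ + z₂ + 1) - 4 * (z₁ * z₂) + 1 =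
      (z₁ - z₂) * (z₁ - z₂) := by
    ring
  exact ⟨⟨hdisc ▸ mul_ne_zero hsub hsub, _, hdisc⟩, z₁ ^ 2, z₂ ^ 2, hsq, by ring, by ring⟩

end Valuation

section Padic

variable {p : ℕ} [Fact p.Prime]

instance padicInt_henselianLocalRing : HenselianLocalRing ℤ_[p] :=
  henselianLocalRing_of_henselianRing

theorem padicInt_integers : (NormedField.valuation (K := ℚ_[p])).Integers ℤ_[p] where
  hom_inj := Subtype.coe_injective
  map_le_one := PadicInt.norm_le_one
  exists_of_le_one x hx := ⟨⟨x, hx⟩, rfl⟩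

theorem padic_norm_p_pow_lt_one {n : ℕ} (hn : 1 ≤ n) : ‖(p : ℚ_[p]) ^ n‖ < 1 := by
  rw [norm_pow]
  exact pow_lt_one₀ (norm_nonneg _) Padic.norm_p_lt_one (Nat.one_le_iff_ne_zero.1 hn)

end Padic

theorem stmt_3 (p : ℕ) [Fact p.Prime] (q : ℕ) (hq : 2 ≤ q) (hpq : p ∣ q)
    (N : ℕ) (hN : 1 ≤ N) (θ : ℚ_[p]) (hθ : θ = (p : ℚ_[p]) ^ N) :
    (θ ^ 2 - 2 * θ - 4 * q + 1 ≠ 0 ∧ IsSquare (θ ^ 2 - 2 * θ - 4 * q + 1)) ∧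
    ∃ x₁ x₂ : ℚ_[p], x₁ ≠ x₂ ∧
      x₁ ^ 2 + (2 * θ - θ ^ 2 + 2 * q - 1) * x₁ + q ^ 2 = 0 ∧
      x₂ ^ 2 + (2 * θ - θ ^ 2 + 2 * q - 1) * x₂ + q ^ 2 = 0 := by
  exact stmt_3_general padicInt_integers <| map_lt_map_sub_one_sq NormedField.valuation
    (hθ ▸ padic_norm_p_pow_lt_one hN) (Padic.norm_natCast_lt_one_iff.2 hpq)
end

section
/- Let p be a prime, let q ≥ 1 be an integer, let M ≥ 2 be an even integer, and set θ = p^{−M} ∈ ℚ_p (the inverse of p^M). Then θ² − 2θ − 4q + 1 is a nonzero square in ℚ_p, and consequently the quadratic equation x² + (2θ − θ² + 2q − 1)x + q² = 0 has two distinct solutions in ℚ_p. -/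
/-!
The solutions `x₁, x₂` are the squares of the roots `a, b` of `y² - (θ - 1) y + q = 0`, whose
discriminant `(a - b)²` is `θ² - 2θ - 4q + 1`. With `t = θ⁻¹`, the substitution `y = θ z` turns
this equation into `z² - (1 - t) z + q t² = 0`. Modulo `t` it reads `z (z - 1) = 0`, so it splits
by Hensel's lemma. Since nothing is divided by `2`, the prime `p = 2` needs no separate treatment.
-/

open IsLocalRing Polynomial

section HenselianPair

variable {R : Type*} [CommRing R] {I : Ideal R}

theorem isUnit_of_sub_mem_of_le_jacobson_bot (hI : I ≤ Ideal.jacobson ⊥) {u v : R}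
    (hu : IsUnit u) (h : v - u ∈ I) : IsUnit v := by
  have := isLocalHom_of_le_jacobson_bot I hI
  apply IsUnit.of_map (Ideal.Quotient.mk I)
  rw [Ideal.Quotient.eq.mpr h]
  exact hu.map _

theorem isUnit_one_sub_of_mem_of_le_jacobson_bot (hI : I ≤ Ideal.jacobson ⊥) {t : R}
    (ht : t ∈ I) : IsUnit (1 - t) :=
  isUnit_of_sub_mem_of_le_jacobson_bot hI isUnit_one (by simpa using ht)

variable [HenselianRing R I]

theorem exists_add_eq_mul_eq_isUnit_sub {u c : R} (hu : IsUnit u) (hc : c ∈ I) :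
    ∃ r s : R, r + s = u ∧ r * s = c ∧ IsUnit (r - s) := by
  let f : R[X] := X ^ 2 - C u * X + C c
  have f_monic : f.Monic := by
    unfold f
    monicity!
  have eval_f (z : R) : f.eval z = z ^ 2 - u * z + c := by simp [f]
  have eval_f' (z : R) : f.derivative.eval z = 2 * z - u := by
    simp [f, one_add_one_eq_two]
  have f_u_mem : f.eval u ∈ I := by
    rwa [eval_f, sq, sub_self, zero_add]
  have f'_u_isUnit : IsUnit (f.derivative.eval u) := by
    rwa [eval_f', two_mul, add_sub_cancel_right]
  obtain ⟨r, hr, hru⟩ := HenselianRing.is_henselian f f_monic u f_u_mem (f'_u_isUnit.map _)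
  rw [IsRoot.def, eval_f] at hr
  refine ⟨r, u - r, by ring, by linear_combination -hr, ?_⟩
  apply isUnit_of_sub_mem_of_le_jacobson_bot (HenselianRing.jac (I := I)) hu
  have : r - (u - r) - u = 2 * (r - u) := by ring
  exact this ▸ I.mul_mem_left 2 hru

variable {A : Type*} [CommRing A] [Algebra R A] {t : R} {θ : A}

theorem exists_add_eq_sub_one_mul_eq_isUnit (q : R) (ht : t ∈ I) (hθ : θ * algebraMap R A t = 1) :
    ∃ a b : A, a + b = θ - 1 ∧ a * b = algebraMap R A q ∧ IsUnit (a + b) ∧ IsUnit (a - b) := by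
  have one_sub_t_isUnit : IsUnit (1 - t) :=
    isUnit_one_sub_of_mem_of_le_jacobson_bot (HenselianRing.jac (I := I)) ht
  have qt_sq_mem : q * t ^ 2 ∈ I := I.mul_mem_left q (I.pow_mem_of_mem ht 2 two_pos)
  obtain ⟨r, s, hadd, hmul, hsub⟩ :=
    exists_add_eq_mul_eq_isUnit_sub one_sub_t_isUnit qt_sq_mem
  have θ_isUnit : IsUnit θ := .of_mul_eq_one _ hθ
  refine ⟨θ * algebraMap R A r, θ * algebraMap R A s, ?_, ?_, ?_, ?_⟩
  · rw [← mul_add, ← map_add, hadd, map_sub, map_one, mul_sub, mul_one, hθ]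
  · calc θ * algebraMap R A r * (θ * algebraMap R A s)
        = θ ^ 2 * algebraMap R A (r * s) := by rw [map_mul]; ring
      _ = algebraMap R A q * (θ * algebraMap R A t) ^ 2 := by
          rw [hmul, map_mul, map_pow]; ring
      _ = algebraMap R A q := by rw [hθ, one_pow, mul_one]
  · rw [← mul_add, ← map_add, hadd]
    exact θ_isUnit.mul (one_sub_t_isUnit.map _)
  · rw [← mul_sub, ← map_sub]
    exact θ_isUnit.mul (hsub.map _)

end HenselianPair

section Vieta

variable {A : Type*} [CommRing A] {θ q a b : A}

theorem discriminant_eq_sub_mul_sub_of_add_eq_of_mul_eq (hadd : a + b = θ - 1) (hmul : a * b = q) :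
    θ ^ 2 - 2 * θ - 4 * q + 1 = (a - b) * (a - b) := by
  linear_combination -(a + b + θ - 1) * hadd + 4 * hmul

theorem quadratic_sq_eq_zero_of_add_eq_of_mul_eq (hadd : a + b = θ - 1) (hmul : a * b = q) :
    (a ^ 2) ^ 2 + (2 * θ - θ ^ 2 + 2 * q - 1) * a ^ 2 + q ^ 2 = 0 := by
  have sum_sq : a ^ 2 + b ^ 2 = (θ - 1) ^ 2 - 2 * q := by
    rw [← hadd, ← hmul]
    ring
  calc (a ^ 2) ^ 2 + (2 * θ - θ ^ 2 + 2 * q - 1) * a ^ 2 + q ^ 2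
      = (a ^ 2) ^ 2 - (a ^ 2 + b ^ 2) * a ^ 2 + (a * b) ^ 2 := by rw [sum_sq, hmul]; ring
    _ = 0 := by ring

end Vieta

theorem stmt_5_general {R A : Type*} [CommRing R] {I : Ideal R} [HenselianRing R I]
    [CommRing A] [Nontrivial A] [Algebra R A] (q : R) {t : R} (ht : t ∈ I)
    {θ : A} (hθ : θ * algebraMap R A t = 1) :
    (θ ^ 2 - 2 * θ - 4 * algebraMap R A q + 1 ≠ 0 ∧
      IsSquare (θ ^ 2 - 2 * θ - 4 * algebraMap R A q + 1)) ∧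
    ∃ x₁ x₂ : A, x₁ ≠ x₂ ∧
      x₁ ^ 2 + (2 * θ - θ ^ 2 + 2 * algebraMap R A q - 1) * x₁ + algebraMap R A q ^ 2 = 0 ∧
      x₂ ^ 2 + (2 * θ - θ ^ 2 + 2 * algebraMap R A q - 1) * x₂ + algebraMap R A q ^ 2 = 0 := by
  obtain ⟨a, b, hadd, hmul, add_isUnit, sub_isUnit⟩ :=
    exists_add_eq_sub_one_mul_eq_isUnit q ht hθ
  have hdiscrim := discriminant_eq_sub_mul_sub_of_add_eq_of_mul_eq hadd hmul
  have sq_ne_sq : a ^ 2 ≠ b ^ 2 := by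
    rw [← sub_ne_zero, sq_sub_sq]
    exact (add_isUnit.mul sub_isUnit).ne_zero
  exact ⟨⟨hdiscrim ▸ (sub_isUnit.mul sub_isUnit).ne_zero, a - b, hdiscrim⟩, a ^ 2, b ^ 2, sq_ne_sq,
    quadratic_sq_eq_zero_of_add_eq_of_mul_eq hadd hmul,
    quadratic_sq_eq_zero_of_add_eq_of_mul_eq (add_comm a b ▸ hadd) (mul_comm a b ▸ hmul)⟩

theorem natCast_pow_mem_maximalIdeal_padicInt (p : ℕ) [Fact p.Prime] {M : ℕ} (hM : M ≠ 0) :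
    (p : ℤ_[p]) ^ M ∈ maximalIdeal ℤ_[p] :=
  Ideal.pow_mem_of_mem _ PadicInt.p_nonunit M hM.bot_lt

theorem inv_natCast_pow_mul_algebraMap_padicInt (p : ℕ) [Fact p.Prime] (M : ℕ) :
    ((p : ℚ_[p]) ^ M)⁻¹ * algebraMap ℤ_[p] ℚ_[p] (p ^ M) = 1 := by
  have : (p : ℚ_[p]) ≠ 0 := mod_cast (Fact.out : p.Prime).ne_zero
  rw [map_pow, map_natCast, inv_mul_cancel₀ (pow_ne_zero M this)]

theorem stmt_5 (p : ℕ) [Fact p.Prime] (q : ℕ) (hq : 1 ≤ q)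
    (M : ℕ) (hM : 2 ≤ M) (hMeven : Even M)
    (θ : ℚ_[p]) (hθ : θ = ((p : ℚ_[p]) ^ M)⁻¹) :
    (θ ^ 2 - 2 * θ - 4 * q + 1 ≠ 0 ∧ IsSquare (θ ^ 2 - 2 * θ - 4 * q + 1)) ∧
    ∃ x₁ x₂ : ℚ_[p], x₁ ≠ x₂ ∧
      x₁ ^ 2 + (2 * θ - θ ^ 2 + 2 * q - 1) * x₁ + q ^ 2 = 0 ∧
      x₂ ^ 2 + (2 * θ - θ ^ 2 + 2 * q - 1) * x₂ + q ^ 2 = 0 := by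
  simpa only [map_natCast] using stmt_5_general (q : ℤ_[p])
    (natCast_pow_mem_maximalIdeal_padicInt p (by lia : M ≠ 0))
    (hθ ▸ inv_natCast_pow_mul_algebraMap_padicInt p M)
end

section
/- Let p be an odd prime, let q ≥ 2 be an integer divisible by p, let N ≥ 1 be an integer, set θ = p^N ∈ ℚ_p, and assume ‖θ‖_p ≤ ‖q‖_p². Let x₁ ≠ x₂ be two distinct roots in ℚ_p of x² + (2θ − θ² + 2q − 1)x + q² = 0, labelled so that ‖x₁‖_p ≤ ‖x₂‖_p. Then: ‖x₁‖_p = ‖q‖_p², ‖x₂‖_p = 1, ‖θx₁ + q‖_p = ‖q‖_p, ‖x₁ + θ + q − 1‖_p = 1, ‖θx₂ + q‖_p = ‖q‖_p, and ‖x₂ + θ + q − 1‖_p = ‖q‖_p. -/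
/-!
Both roots are at most `1` in norm: by Vieta's formulas their sum has norm `1` and their product has
norm `‖q‖ ^ 2 < 1`, so the ultrametric inequality forces one root to have norm `1` and the other
`‖q‖ ^ 2`. For `‖x‖ ≤ 1` the term `q` dominates `θ * x + q`, since `‖θ‖ < ‖q‖`. Finally, the
fixed-point equation `(θ * x + q) ^ 2 = x * (x + θ + q - 1) ^ 2` turns the norms of the root and of
the numerator into the norm of the denominator.
-/

theorem add_eq_neg_and_mul_eq_of_quadratic_roots {R : Type*} [CommRing R] [NoZeroDivisors R]
    {b c x y : R} (hxy : x ≠ y) (hx : x ^ 2 + b * x + c = 0) (hy : y ^ 2 + b * y + c = 0) :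
    x + y = -b ∧ x * y = c := by
  have hsum : x + y = -b := by
    refine mul_left_cancel₀ (sub_ne_zero.mpr hxy) ?_
    linear_combination hx - hy
  exact ⟨hsum, by linear_combination x * hsum - hx⟩

theorem norm_add_eq_right_of_norm_lt {E : Type*} [SeminormedAddGroup E] [IsUltrametricDist E]
    {x y : E} (h : ‖x‖ < ‖y‖) : ‖x + y‖ = ‖y‖ := by
  rw [IsUltrametricDist.norm_add_eq_max_of_norm_ne_norm h.ne, max_eq_right h.le]

theorem norm_lt_norm_of_norm_mul_lt_norm_add_sq {R : Type*} [SeminormedRing R] [NormMulClass R]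
    [IsUltrametricDist R] {x y : R} (hle : ‖x‖ ≤ ‖y‖) (h : ‖x * y‖ < ‖x + y‖ ^ 2) :
    ‖x‖ < ‖y‖ := by
  refine hle.lt_of_ne fun heq ↦ h.not_ge ?_
  calc
    ‖x + y‖ ^ 2 ≤ ‖y‖ ^ 2 := by
      gcongr
      exact (IsUltrametricDist.norm_add_le_max x y).trans_eq (max_eq_right hle)
    _ = ‖x * y‖ := by rw [norm_mul, heq, sq]

-- `‖c‖ < ‖b‖ ^ 2` means that the Newton polygon of `X ^ 2 + b * X + c` has two distinct slopes.
theorem norm_quadratic_roots_of_norm_lt_sq {R : Type*} [NormedCommRing R] [NormMulClass R]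
    [IsUltrametricDist R] {b c x y : R} (hxy : x ≠ y)
    (hx : x ^ 2 + b * x + c = 0) (hy : y ^ 2 + b * y + c = 0) (hle : ‖x‖ ≤ ‖y‖)
    (hcb : ‖c‖ < ‖b‖ ^ 2) : ‖x‖ * ‖b‖ = ‖c‖ ∧ ‖y‖ = ‖b‖ := by
  obtain ⟨hsum, hprod⟩ := add_eq_neg_and_mul_eq_of_quadratic_roots hxy hx hy
  have hlt : ‖x‖ < ‖y‖ :=
    norm_lt_norm_of_norm_mul_lt_norm_add_sq hle (by rwa [hprod, hsum, norm_neg])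
  have hy_norm : ‖y‖ = ‖b‖ := by rw [← norm_add_eq_right_of_norm_lt hlt, hsum, norm_neg]
  exact ⟨by rw [← hy_norm, ← norm_mul, hprod], hy_norm⟩

section Potts

theorem potts_fixedPoint_of_quadratic_root {R : Type*} [CommRing R] {θ q x : R}
    (hx : x ^ 2 + (2 * θ - θ ^ 2 + 2 * q - 1) * x + q ^ 2 = 0) :
    (θ * x + q) ^ 2 = x * (x + θ + q - 1) ^ 2 := by
  linear_combination (1 - x) * hx

theorem norm_potts_numerator {R : Type*} [SeminormedRing R] [IsUltrametricDist R] {θ q x : R}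
    (hθq : ‖θ‖ < ‖q‖) (hx : ‖x‖ ≤ 1) : ‖θ * x + q‖ = ‖q‖ :=
  norm_add_eq_right_of_norm_lt <|
    ((norm_mul_le θ x).trans (mul_le_of_le_one_right (norm_nonneg θ) hx)).trans_lt hθq

variable {R : Type*} [SeminormedCommRing R] [NormMulClass R] [IsUltrametricDist R] {θ q x : R}

theorem norm_potts_linear_coeff [NormOneClass R] (hθ : ‖θ‖ < 1) (hq : ‖q‖ < 1) :
    ‖2 * θ - θ ^ 2 + 2 * q - 1‖ = 1 := by
  have hsq : ‖-(-θ + 1) ^ 2‖ = 1 := by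
    rw [norm_neg, norm_pow, norm_add_eq_right_of_norm_lt (by simpa using hθ), norm_one, one_pow]
  have htwo : ‖(2 : R)‖ ≤ 1 := mod_cast IsUltrametricDist.norm_natCast_le_one R 2
  have htwo_mul : ‖2 * q‖ < 1 :=
    (norm_mul_le _ _).trans_lt (mul_lt_one_of_nonneg_of_lt_one_right htwo (norm_nonneg q) hq)
  calc
    ‖2 * θ - θ ^ 2 + 2 * q - 1‖ = ‖2 * q + -(-θ + 1) ^ 2‖ := by ring_nf
    _ = 1 := by rw [norm_add_eq_right_of_norm_lt (by rwa [hsq]), hsq]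

theorem norm_mul_norm_potts_denominator_sq (hθq : ‖θ‖ < ‖q‖) (hx_norm : ‖x‖ ≤ 1)
    (hx : x ^ 2 + (2 * θ - θ ^ 2 + 2 * q - 1) * x + q ^ 2 = 0) :
    ‖x‖ * ‖x + θ + q - 1‖ ^ 2 = ‖q‖ ^ 2 := by
  simpa only [sq, norm_mul, norm_potts_numerator hθq hx_norm] using
    congrArg norm (potts_fixedPoint_of_quadratic_root hx).symm

end Potts

theorem stmt_6_general {R : Type*} [NormedCommRing R] [NormMulClass R] [NormOneClass R]
    [IsUltrametricDist R] {θ q x₁ x₂ : R} (hq : ‖q‖ < 1) (hθq : ‖θ‖ < ‖q‖) (hx : x₁ ≠ x₂)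
    (h₁ : x₁ ^ 2 + (2 * θ - θ ^ 2 + 2 * q - 1) * x₁ + q ^ 2 = 0)
    (h₂ : x₂ ^ 2 + (2 * θ - θ ^ 2 + 2 * q - 1) * x₂ + q ^ 2 = 0)
    (hord : ‖x₁‖ ≤ ‖x₂‖) :
    ‖x₁‖ = ‖q‖ ^ 2 ∧ ‖x₂‖ = 1 ∧
    ‖θ * x₁ + q‖ = ‖q‖ ∧ ‖x₁ + θ + q - 1‖ = 1 ∧
    ‖θ * x₂ + q‖ = ‖q‖ ∧ ‖x₂ + θ + q - 1‖ = ‖q‖ := by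
  have hq_pos : 0 < ‖q‖ := (norm_nonneg θ).trans_lt hθq
  have hb : ‖2 * θ - θ ^ 2 + 2 * q - 1‖ = 1 := norm_potts_linear_coeff (hθq.trans hq) hq
  have hq_sq : ‖q ^ 2‖ < 1 := by
    rw [norm_pow]
    exact pow_lt_one₀ hq_pos.le hq two_ne_zero
  obtain ⟨hx₁, hx₂⟩ := norm_quadratic_roots_of_norm_lt_sq hx h₁ h₂ hord (by rwa [hb, one_pow])
  rw [hb] at hx₂
  rw [hb, mul_one, norm_pow] at hx₁
  have hx₁_le : ‖x₁‖ ≤ 1 := hord.trans_eq hx₂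
  have hden₁ := norm_mul_norm_potts_denominator_sq hθq hx₁_le h₁
  have hden₂ := norm_mul_norm_potts_denominator_sq hθq hx₂.le h₂
  rw [hx₁, mul_eq_left₀ (pow_pos hq_pos 2).ne',
    pow_eq_one_iff_of_nonneg (norm_nonneg _) two_ne_zero] at hden₁
  rw [hx₂, one_mul, sq_eq_sq₀ (norm_nonneg _) (norm_nonneg _)] at hden₂
  exact ⟨hx₁, hx₂, norm_potts_numerator hθq hx₁_le, hden₁, norm_potts_numerator hθq hx₂.le, hden₂⟩

theorem stmt_6 (p : ℕ) [Fact p.Prime] (hp2 : p ≠ 2)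
    (q : ℕ) (hq : 2 ≤ q) (hpq : p ∣ q)
    (N : ℕ) (hN : 1 ≤ N) (θ : ℚ_[p]) (hθ : θ = (p : ℚ_[p]) ^ N)
    (hθq : ‖θ‖ ≤ ‖(q : ℚ_[p])‖ ^ 2)
    (x₁ x₂ : ℚ_[p]) (hx : x₁ ≠ x₂)
    (h₁ : x₁ ^ 2 + (2 * θ - θ ^ 2 + 2 * q - 1) * x₁ + q ^ 2 = 0)
    (h₂ : x₂ ^ 2 + (2 * θ - θ ^ 2 + 2 * q - 1) * x₂ + q ^ 2 = 0)
    (hord : ‖x₁‖ ≤ ‖x₂‖) :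
    ‖x₁‖ = ‖(q : ℚ_[p])‖ ^ 2 ∧ ‖x₂‖ = 1 ∧
    ‖θ * x₁ + q‖ = ‖(q : ℚ_[p])‖ ∧ ‖x₁ + θ + q - 1‖ = 1 ∧
    ‖θ * x₂ + q‖ = ‖(q : ℚ_[p])‖ ∧ ‖x₂ + θ + q - 1‖ = ‖(q : ℚ_[p])‖ := by
  have hq_norm : ‖(q : ℚ_[p])‖ < 1 := Padic.norm_natCast_lt_one_iff.mpr hpq
  have hq_pos : 0 < ‖(q : ℚ_[p])‖ := norm_pos_iff.mpr (mod_cast (by lia : q ≠ 0))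
  exact stmt_6_general hq_norm (hθq.trans_lt (pow_lt_self_of_lt_one₀ hq_pos hq_norm one_lt_two))
    hx h₁ h₂ hord
end

section
/- Let p be an odd prime, let q ≥ 1 be an integer not divisible by p, let N ≥ 1 be an integer, and set θ = p^N ∈ ℚ_p. Let x₁ ≠ x₂ be two distinct roots in ℚ_p of x² + (2θ − θ² + 2q − 1)x + q² = 0. Then for i = 1, 2: ‖x_i‖_p = 1, ‖θx_i + q‖_p = 1, and ‖x_i + θ + q − 1‖_p = 1. -/
/-!
The product of the two roots of the quadratic is the unit `q ^ 2` and its linear coefficient is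
integral, so its Newton polygon has a single slope and every root `x` is a unit. As `‖θ‖ < 1`,
the numerator `θ * x + q` of the Potts map is then a unit too. Finally the fixed-point equation
`x * (x + θ + q - 1) ^ 2 = (θ * x + q) ^ 2`, cleared of denominators, transfers this to the
denominator.
-/

theorem norm_sq_eq_of_quadratic_eq_zero {R : Type*} [SeminormedRing R] [NormMulClass R]
    [IsUltrametricDist R] {b c x : R} (hbc : ‖b‖ ^ 2 ≤ ‖c‖) (h : x ^ 2 + b * x + c = 0) :
    ‖x‖ ^ 2 = ‖c‖ := by
  have hprod : ‖x + b‖ * ‖x‖ = ‖c‖ := by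
    rw [← norm_mul, add_mul, ← sq, eq_neg_of_add_eq_zero_left h, norm_neg]
  rcases lt_or_ge ‖b‖ ‖x‖ with hlt | hle
  · have hadd : ‖x + b‖ = ‖x‖ := by
      rw [IsUltrametricDist.norm_add_eq_max_of_norm_ne_norm hlt.ne', max_eq_left hlt.le]
    rw [← hprod, hadd, sq]
  · have hadd : ‖x + b‖ ≤ ‖b‖ :=
      (IsUltrametricDist.norm_add_le_max x b).trans (max_le hle le_rfl)
    have hc : ‖c‖ ≤ ‖b‖ * ‖x‖ := hprod ▸ mul_le_mul_of_nonneg_right hadd (norm_nonneg x)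
    have hbx : ‖b‖ = ‖x‖ := by nlinarith [hbc.trans hc, norm_nonneg x]
    rw [hbx] at hbc hc
    exact le_antisymm hbc (hc.trans_eq (sq _).symm)

theorem potts_fixedPoint_factorization {R : Type*} [CommRing R] (θ q x : R) :
    x * (x + θ + q - 1) ^ 2 - (θ * x + q) ^ 2 =
      (x - 1) * (x ^ 2 + (2 * θ - θ ^ 2 + 2 * q - 1) * x + q ^ 2) := by
  ring

section Ultrametric

variable {R : Type*} [SeminormedCommRing R] [NormOneClass R] [IsUltrametricDist R] {θ q x : R}

theorem norm_potts_linearCoeff_le_one (hθ : ‖θ‖ ≤ 1) (hq : ‖q‖ ≤ 1) :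
    ‖2 * θ - θ ^ 2 + 2 * q - 1‖ ≤ 1 := by
  have hsub : ‖θ - 1‖ ≤ 1 := by
    rw [sub_eq_add_neg]
    exact (IsUltrametricDist.norm_add_le_max θ (-1)).trans
      (max_le hθ (by rw [norm_neg, norm_one]))
  have hsq : ‖-(θ - 1) ^ 2‖ ≤ 1 := by
    rw [norm_neg]
    exact (norm_pow_le _ 2).trans (pow_le_one₀ (norm_nonneg _) hsub)
  have hqq : ‖q + q‖ ≤ 1 := (IsUltrametricDist.norm_add_le_max q q).trans (max_le hq hq)
  rw [show 2 * θ - θ ^ 2 + 2 * q - 1 = (q + q) + -(θ - 1) ^ 2 by ring]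
  exact (IsUltrametricDist.norm_add_le_max _ _).trans (max_le hqq hsq)

variable [NormMulClass R]

theorem norm_eq_one_of_potts_quadratic_eq_zero (hθ : ‖θ‖ ≤ 1) (hq : ‖q‖ = 1)
    (h : x ^ 2 + (2 * θ - θ ^ 2 + 2 * q - 1) * x + q ^ 2 = 0) : ‖x‖ = 1 := by
  have hq2 : ‖q ^ 2‖ = 1 := by rw [norm_pow, hq, one_pow]
  have hcoeff : ‖2 * θ - θ ^ 2 + 2 * q - 1‖ ^ 2 ≤ ‖q ^ 2‖ :=
    hq2 ▸ pow_le_one₀ (norm_nonneg _) (norm_potts_linearCoeff_le_one hθ hq.le)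
  have hx : ‖x‖ ^ 2 = 1 := (norm_sq_eq_of_quadratic_eq_zero hcoeff h).trans hq2
  exact (pow_eq_one_iff_of_nonneg (norm_nonneg x) two_ne_zero).mp hx

theorem stmt_7_general (hθ : ‖θ‖ < 1) (hq : ‖q‖ = 1)
    (h : x ^ 2 + (2 * θ - θ ^ 2 + 2 * q - 1) * x + q ^ 2 = 0) :
    ‖x‖ = 1 ∧ ‖θ * x + q‖ = 1 ∧ ‖x + θ + q - 1‖ = 1 := by
  have hx : ‖x‖ = 1 := norm_eq_one_of_potts_quadratic_eq_zero hθ.le hq h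
  have hnum : ‖θ * x + q‖ = 1 := by
    have hlt : ‖θ * x‖ < ‖q‖ := by rwa [norm_mul, hx, mul_one, hq]
    rw [IsUltrametricDist.norm_add_eq_max_of_norm_ne_norm hlt.ne, max_eq_right hlt.le, hq]
  have hfixed : x * (x + θ + q - 1) ^ 2 = (θ * x + q) ^ 2 := by
    rw [← sub_eq_zero, potts_fixedPoint_factorization, h, mul_zero]
  have hden : ‖x + θ + q - 1‖ ^ 2 = 1 := by
    simpa only [norm_mul, norm_pow, hx, hnum, one_mul, one_pow] using congrArg norm hfixed
  exact ⟨hx, hnum, (pow_eq_one_iff_of_nonneg (norm_nonneg _) two_ne_zero).mp hden⟩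

end Ultrametric

theorem stmt_7 (p : ℕ) [Fact p.Prime] (hp2 : p ≠ 2)
    (q : ℕ) (hq : 1 ≤ q) (hpq : ¬ p ∣ q)
    (N : ℕ) (hN : 1 ≤ N) (θ : ℚ_[p]) (hθ : θ = (p : ℚ_[p]) ^ N)
    (x₁ x₂ : ℚ_[p]) (hx : x₁ ≠ x₂)
    (h₁ : x₁ ^ 2 + (2 * θ - θ ^ 2 + 2 * q - 1) * x₁ + q ^ 2 = 0)
    (h₂ : x₂ ^ 2 + (2 * θ - θ ^ 2 + 2 * q - 1) * x₂ + q ^ 2 = 0) :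
    (‖x₁‖ = 1 ∧ ‖θ * x₁ + q‖ = 1 ∧ ‖x₁ + θ + q - 1‖ = 1) ∧
    (‖x₂‖ = 1 ∧ ‖θ * x₂ + q‖ = 1 ∧ ‖x₂ + θ + q - 1‖ = 1) := by
  have hqnorm : ‖(q : ℚ_[p])‖ = 1 :=
    Padic.norm_natCast_eq_one_iff.mpr ((Fact.out : p.Prime).coprime_iff_not_dvd.mpr hpq)
  have hθnorm : ‖θ‖ < 1 := by
    rw [hθ, norm_pow]
    exact pow_lt_one₀ (norm_nonneg _) Padic.norm_p_lt_one (Nat.one_le_iff_ne_zero.mp hN)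
  exact ⟨stmt_7_general hθnorm hqnorm h₁, stmt_7_general hθnorm hqnorm h₂⟩
end

section
/- Let p be an odd prime, let q ≥ 1 be an integer not divisible by p, let N ≥ 1 be an integer, and set θ = p^N ∈ ℚ_p. Let x₁ ≠ x₂ be two distinct roots in ℚ_p of x² + (2θ − θ² + 2q − 1)x + q² = 0. Then, for the map f(x) = ((θx + q)/(x + θ + q − 1))², all three fixed points are neutral: ‖deriv f 1‖_p = 1, ‖deriv f x₁‖_p = 1, and ‖deriv f x₂‖_p = 1. -/
/-!
In an ultrametric field with `‖θ‖ < 1` and `‖q‖ = 1`, comparing norms in the fixed-point equation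
`(θ x + q) ^ k = x (x + θ + q - 1) ^ k` rules out `‖x‖ < 1` and `‖x‖ > 1`, so `‖x‖ = 1`, and then
the numerator and the denominator have norm `1`. The Möbius map `x ↦ (θ x + q) / (x + θ + q - 1)`
has determinant `(θ - 1) (θ + q)`, which also has norm `1`, so the only factor of the derivative
of its `k`-th power that can affect the norm is the exponent `k`. For `k = 2` the two sides
of the fixed-point equation differ by `x - 1` times the given quadratic.
-/

open Function IsUltrametricDist

/-- The Potts–Bethe map `x ↦ ((θ x + q) / (x + θ + q - 1)) ^ k` of the `q`-state Potts model on the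
Cayley tree of order `k`, with `q` allowed to be any element of the field. At the pole
`x = 1 - θ - q` it takes the junk value `0 ^ k`. -/
def pottsMap {K : Type*} [Field K] (k : ℕ) (θ q x : K) : K :=
  ((θ * x + q) / (x + θ + q - 1)) ^ k

theorem norm_add_eq_one_of_lt {E : Type*} [SeminormedAddGroup E] [IsUltrametricDist E] {a b : E}
    (ha : ‖a‖ < 1) (hb : ‖b‖ = 1) : ‖a + b‖ = 1 := by
  rw [norm_add_eq_max_of_norm_ne_norm (hb.symm ▸ ha.ne), hb, max_eq_right ha.le]

namespace pottsMap

section Field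

variable {K : Type*} [Field K] {k : ℕ} {θ q x : K}

theorem det_eq (θ q x : K) :
    θ * (x + θ + q - 1) - (θ * x + q) = (θ - 1) * (θ + q) := by
  ring

theorem isFixedPt_iff (hden : x + θ + q - 1 ≠ 0) :
    IsFixedPt (pottsMap k θ q) x ↔ (θ * x + q) ^ k = x * (x + θ + q - 1) ^ k := by
  rw [IsFixedPt, pottsMap, div_pow, div_eq_iff (pow_ne_zero k hden)]

theorem denominator_ne_zero_of_isFixedPt (hk : k ≠ 0) (hx : x ≠ 0)
    (hfix : IsFixedPt (pottsMap k θ q) x) : x + θ + q - 1 ≠ 0 := by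
  intro hden
  apply hx
  rw [← hfix.eq, pottsMap, hden, div_zero, zero_pow hk]

theorem isFixedPt_one (hθq : θ + q ≠ 0) : IsFixedPt (pottsMap k θ q) 1 := by
  have hden : 1 + θ + q - 1 = θ + q := by ring
  rw [isFixedPt_iff (hden ▸ hθq), hden, mul_one, one_mul]

theorem isFixedPt_two_of_quadratic_eq_zero (hθ : θ ≠ 1) (hθq : θ + q ≠ 0)
    (hx : x ^ 2 + (2 * θ - θ ^ 2 + 2 * q - 1) * x + q ^ 2 = 0) :
    IsFixedPt (pottsMap 2 θ q) x := by
  have hcross : (θ * x + q) ^ 2 = x * (x + θ + q - 1) ^ 2 := by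
    linear_combination (1 - x) * hx
  refine (isFixedPt_iff fun hden => ?_).2 hcross
  have hnum : θ * x + q = 0 := by simpa [hden] using hcross
  have hdet := det_eq θ q x
  rw [hden, hnum, mul_zero, sub_zero] at hdet
  exact mul_ne_zero (sub_ne_zero.2 hθ) hθq hdet.symm

end Field

theorem hasDerivAt {K : Type*} [NontriviallyNormedField K] (k : ℕ) {θ q x : K}
    (hden : x + θ + q - 1 ≠ 0) :
    HasDerivAt (pottsMap k θ q)
      (k * ((θ * x + q) / (x + θ + q - 1)) ^ (k - 1) *
        ((θ - 1) * (θ + q) / (x + θ + q - 1) ^ 2)) x := by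
  have hnum' : HasDerivAt (fun y => θ * y + q) θ x := by
    simpa using ((hasDerivAt_id x).const_mul θ).add_const q
  have hden' : HasDerivAt (fun y => y + θ + q - 1) 1 x :=
    (((hasDerivAt_id x).add_const θ).add_const q).sub_const 1
  rw [← det_eq θ q x]
  have hpow := (hnum'.fun_div hden' hden).fun_pow k
  rw [mul_one] at hpow
  exact hpow

section Ultrametric

variable {K : Type*} [NormedField K] [IsUltrametricDist K] {k : ℕ} {θ q x : K}

theorem norm_numerator_eq_one (hθ : ‖θ‖ < 1) (hq : ‖q‖ = 1) (hx : ‖x‖ ≤ 1) : ‖θ * x + q‖ = 1 := by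
  refine norm_add_eq_one_of_lt ?_ hq
  rw [norm_mul]
  exact mul_lt_one_of_nonneg_of_lt_one_left (norm_nonneg θ) hθ hx

theorem norm_add_sub_one_le_one (hθ : ‖θ‖ ≤ 1) (hq : ‖q‖ ≤ 1) : ‖θ + q - 1‖ ≤ 1 := by
  rw [sub_eq_add_neg]
  refine (norm_add_le_max _ _).trans (max_le ((norm_add_le_max _ _).trans (max_le hθ hq)) ?_)
  rw [norm_neg, norm_one]

theorem norm_le_one_of_cross_eq (hθ : ‖θ‖ ≤ 1) (hq : ‖q‖ ≤ 1)
    (hx : (θ * x + q) ^ k = x * (x + θ + q - 1) ^ k) : ‖x‖ ≤ 1 := by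
  by_contra! hlt
  have hden : ‖x + θ + q - 1‖ = ‖x‖ := by
    have hshift : ‖θ + q - 1‖ < ‖x‖ := (norm_add_sub_one_le_one hθ hq).trans_lt hlt
    rw [add_assoc, add_sub_assoc, norm_add_eq_max_of_norm_ne_norm hshift.ne',
      max_eq_left hshift.le]
  have hnum : ‖θ * x + q‖ ≤ ‖x‖ := by
    refine (norm_add_le_max _ _).trans (max_le ?_ (hq.trans hlt.le))
    rw [norm_mul]
    exact mul_le_of_le_one_left (norm_nonneg x) hθ
  have hle : ‖x‖ * ‖x‖ ^ k ≤ ‖x‖ ^ k := calc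
    ‖x‖ * ‖x‖ ^ k = ‖θ * x + q‖ ^ k := by rw [← norm_pow (_ + _), hx, norm_mul, norm_pow, hden]
    _ ≤ ‖x‖ ^ k := pow_le_pow_left₀ (norm_nonneg _) hnum k
  exact hle.not_gt (lt_mul_of_one_lt_left (by positivity) hlt)

theorem norm_eq_one_of_cross_eq (hθ : ‖θ‖ < 1) (hq : ‖q‖ = 1)
    (hx : (θ * x + q) ^ k = x * (x + θ + q - 1) ^ k) : ‖x‖ = 1 := by
  have hle := norm_le_one_of_cross_eq hθ.le hq.le hx
  have hden : ‖x + θ + q - 1‖ ≤ 1 := by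
    rw [add_assoc, add_sub_assoc]
    exact (norm_add_le_max _ _).trans (max_le hle (norm_add_sub_one_le_one hθ.le hq.le))
  refine hle.antisymm ?_
  calc
    1 = ‖x‖ * ‖x + θ + q - 1‖ ^ k := by
      rw [← norm_pow, ← norm_mul, ← hx, norm_pow, norm_numerator_eq_one hθ hq hle, one_pow]
    _ ≤ ‖x‖ := mul_le_of_le_one_right (norm_nonneg x) (pow_le_one₀ (norm_nonneg _) hden)

theorem norm_denominator_eq_one_of_cross_eq (hk : k ≠ 0) (hθ : ‖θ‖ < 1) (hq : ‖q‖ = 1)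
    (hx : (θ * x + q) ^ k = x * (x + θ + q - 1) ^ k) : ‖x + θ + q - 1‖ = 1 := by
  have hx1 := norm_eq_one_of_cross_eq hθ hq hx
  have hnorm := congrArg norm hx
  rw [norm_mul, norm_pow, norm_pow, norm_numerator_eq_one hθ hq hx1.le, hx1, one_mul,
    one_pow] at hnorm
  exact (pow_eq_one_iff_of_nonneg (norm_nonneg _) hk).1 hnorm.symm

end Ultrametric

theorem norm_deriv_of_isFixedPt {K : Type*} [NontriviallyNormedField K] [IsUltrametricDist K]
    {k : ℕ} {θ q x : K} (hk : k ≠ 0) (hθ : ‖θ‖ < 1) (hq : ‖q‖ = 1) (hx : x ≠ 0)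
    (hfix : IsFixedPt (pottsMap k θ q) x) :
    ‖deriv (pottsMap k θ q) x‖ = ‖(k : K)‖ := by
  have hden0 := denominator_ne_zero_of_isFixedPt hk hx hfix
  have hcross := (isFixedPt_iff hden0).1 hfix
  have hnum := norm_numerator_eq_one hθ hq (norm_eq_one_of_cross_eq hθ hq hcross).le
  have hden := norm_denominator_eq_one_of_cross_eq hk hθ hq hcross
  have hθ1 : ‖θ - 1‖ = 1 := by
    rw [sub_eq_add_neg]
    exact norm_add_eq_one_of_lt hθ (by simp)
  rw [(hasDerivAt k hden0).deriv]
  simp only [norm_mul, norm_div, norm_pow, hnum, hden, hθ1, norm_add_eq_one_of_lt hθ hq, div_one,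
    one_pow, mul_one]

end pottsMap

theorem stmt_9_general {K : Type*} [NontriviallyNormedField K] [IsUltrametricDist K] {θ q : K}
    (hθ : ‖θ‖ < 1) (hq : ‖q‖ = 1) :
    ‖deriv (pottsMap 2 θ q) 1‖ = ‖(2 : K)‖ ∧
      ∀ x, x ^ 2 + (2 * θ - θ ^ 2 + 2 * q - 1) * x + q ^ 2 = 0 →
        ‖deriv (pottsMap 2 θ q) x‖ = ‖(2 : K)‖ := by
  have hq0 : q ≠ 0 := norm_ne_zero_iff.1 (by simp [hq])
  have hθq : θ + q ≠ 0 := norm_ne_zero_iff.1 (by simp [norm_add_eq_one_of_lt hθ hq])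
  have hθ1 : θ ≠ 1 := by
    rintro rfl
    simp at hθ
  refine ⟨pottsMap.norm_deriv_of_isFixedPt two_ne_zero hθ hq one_ne_zero
    (pottsMap.isFixedPt_one hθq), fun x hx => ?_⟩
  have hx0 : x ≠ 0 := by
    rintro rfl
    simp [hq0] at hx
  exact pottsMap.norm_deriv_of_isFixedPt two_ne_zero hθ hq hx0
    (pottsMap.isFixedPt_two_of_quadratic_eq_zero hθ1 hθq hx)

theorem stmt_9 (p : ℕ) [Fact p.Prime] (hp2 : p ≠ 2)
    (q : ℕ) (hq : 1 ≤ q) (hpq : ¬ p ∣ q)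
    (N : ℕ) (hN : 1 ≤ N) (θ : ℚ_[p]) (hθ : θ = (p : ℚ_[p]) ^ N)
    (x₁ x₂ : ℚ_[p]) (hx : x₁ ≠ x₂)
    (h₁ : x₁ ^ 2 + (2 * θ - θ ^ 2 + 2 * q - 1) * x₁ + q ^ 2 = 0)
    (h₂ : x₂ ^ 2 + (2 * θ - θ ^ 2 + 2 * q - 1) * x₂ + q ^ 2 = 0)
    (f : ℚ_[p] → ℚ_[p])
    (hf : f = fun x => ((θ * x + q) / (x + θ + q - 1)) ^ 2) :
    ‖deriv f 1‖ = 1 ∧ ‖deriv f x₁‖ = 1 ∧ ‖deriv f x₂‖ = 1 := by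
  have hp : p.Prime := Fact.out
  have hnorm2 : ‖(2 : ℚ_[p])‖ = 1 := by
    exact_mod_cast Padic.norm_natCast_eq_one_iff.2 ((Nat.coprime_primes hp Nat.prime_two).2 hp2)
  have hnormq : ‖(q : ℚ_[p])‖ = 1 :=
    Padic.norm_natCast_eq_one_iff.2 (hp.coprime_iff_not_dvd.2 hpq)
  have hnormθ : ‖θ‖ < 1 := by
    rw [hθ, norm_pow]
    exact pow_lt_one₀ (norm_nonneg _) Padic.norm_p_lt_one (Nat.one_le_iff_ne_zero.1 hN)
  obtain rfl : f = pottsMap 2 θ (q : ℚ_[p]) := hf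
  obtain ⟨hone, hroot⟩ := stmt_9_general hnormθ hnormq
  rw [hnorm2] at hone hroot
  exact ⟨hone, hroot x₁ h₁, hroot x₂ h₂⟩
end

section
/- Let p be an odd prime, let q ≥ 1 be an integer, let M ≥ 1 be an integer, and set θ = p^{−M} ∈ ℚ_p, so ‖θ‖_p > 1. Let x₁ and x₂ be roots in ℚ_p of x² + (2θ − θ² + 2q − 1)x + q² = 0 with ‖x₁‖_p = ‖θ‖_p² and ‖x₂‖_p = (‖q‖_p/‖θ‖_p)². Then, for the map f(x) = ((θx + q)/(x + θ + q − 1))², one has ‖deriv f 1‖_p = 1, ‖deriv f x₁‖_p = ‖θ‖_p⁻¹ < 1, and ‖deriv f x₂‖_p = ‖q‖_p/‖θ‖_p < 1; in particular the fixed point 1 is neutral and the fixed points x₁, x₂ are attractive. -/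
/-!
Write `N x = θ * x + q` and `D x = x + θ + q - 1`, so that the map is `(N / D) ^ k` with `k = 2`.
Since `θ * D x - N x = (θ - 1) * (θ + q)` does not depend on `x`, its derivative is
`k * (N x / D x) ^ (k - 1) * ((θ - 1) * (θ + q) / D x ^ 2)`. When `‖q‖ ≤ 1 < ‖θ‖`, the ultrametric
inequality gives `‖θ - 1‖ = ‖θ + q‖ = ‖θ‖`, and at each of the three points a single summand
determines the norms of `N` and `D`: both equal `θ + q` at `1`, the dominant terms are `θ * x` and
`x` when `‖θ‖ < ‖x‖`, and `q` and `θ` when `‖x‖ < ‖q‖ / ‖θ‖`.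
-/

theorem norm_add_eq_left_of_norm_lt {E : Type*} [SeminormedAddGroup E] [IsUltrametricDist E]
    {a b : E} (h : ‖b‖ < ‖a‖) : ‖a + b‖ = ‖a‖ := by
  rw [IsUltrametricDist.norm_add_eq_max_of_norm_ne_norm h.ne', max_eq_left h.le]

theorem norm_add_sub_one_of_one_lt_norm {R : Type*} [SeminormedRing R] [NormOneClass R]
    [IsUltrametricDist R] {a b : R} (ha : 1 < ‖a‖) (hb : ‖b‖ ≤ 1) : ‖a + (b - 1)‖ = ‖a‖ := by
  have norm_b_sub_one_le : ‖b - 1‖ ≤ 1 := by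
    simpa [sub_eq_add_neg, hb] using IsUltrametricDist.norm_add_le_max b (-1)
  exact norm_add_eq_left_of_norm_lt (norm_b_sub_one_le.trans_lt ha)

theorem norm_natCast_mul_pow_lt_one (R : Type*) [SeminormedRing R] [NormOneClass R]
    [IsUltrametricDist R] (n : ℕ) {m : ℕ} (hm : m ≠ 0) {r : ℝ} (hr₀ : 0 ≤ r) (hr : r < 1) :
    ‖(n : R)‖ * r ^ m < 1 :=
  mul_lt_one_of_nonneg_of_lt_one_right (IsUltrametricDist.norm_natCast_le_one R n)
    (pow_nonneg hr₀ m) (pow_lt_one₀ hr₀ hr hm)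

section PottsBethe

variable {K : Type*} [NontriviallyNormedField K] {k : ℕ} {θ q x : K}

/-- The Potts–Bethe map, whose fixed points describe the translation-invariant Gibbs measures of
the `(q + 1)`-state Potts model on the Cayley tree of order `k`. The parameters `θ` and `q` are
arbitrary field elements, and the value at the pole `1 - θ - q` is the junk value `0 ^ k`. -/
def pottsBetheMap (k : ℕ) (θ q x : K) : K :=
  ((θ * x + q) / (x + θ + q - 1)) ^ k

theorem hasDerivAt_pottsBetheMap (hx : x + θ + q - 1 ≠ 0) :
    HasDerivAt (pottsBetheMap k θ q)
      (k * ((θ * x + q) / (x + θ + q - 1)) ^ (k - 1) *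
        ((θ - 1) * (θ + q) / (x + θ + q - 1) ^ 2)) x := by
  have hasDerivAt_num : HasDerivAt (fun y ↦ θ * y + q) θ x := by
    simpa using ((hasDerivAt_id x).const_mul θ).add_const q
  have hasDerivAt_den : HasDerivAt (fun y ↦ y + θ + q - 1) 1 x :=
    (((hasDerivAt_id x).add_const θ).add_const q).sub_const 1
  refine ((hasDerivAt_num.fun_div hasDerivAt_den hx).fun_pow k).congr_deriv ?_
  ring

variable [IsUltrametricDist K]

theorem norm_deriv_pottsBetheMap (hθ : 1 < ‖θ‖) (hq : ‖q‖ ≤ 1) (hx : x + θ + q - 1 ≠ 0) :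
    ‖deriv (pottsBetheMap k θ q) x‖ =
      ‖(k : K)‖ * (‖θ * x + q‖ / ‖x + θ + q - 1‖) ^ (k - 1) * (‖θ‖ / ‖x + θ + q - 1‖) ^ 2 := by
  have norm_θ_sub_one : ‖θ - 1‖ = ‖θ‖ := by
    rw [sub_eq_add_neg, norm_add_eq_left_of_norm_lt (by simpa using hθ)]
  have norm_θ_add_q : ‖θ + q‖ = ‖θ‖ := norm_add_eq_left_of_norm_lt (hq.trans_lt hθ)
  rw [(hasDerivAt_pottsBetheMap hx).deriv]
  simp only [norm_mul, norm_div, norm_pow, norm_θ_sub_one, norm_θ_add_q]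
  ring

theorem norm_deriv_pottsBetheMap_one (hθ : 1 < ‖θ‖) (hq : ‖q‖ ≤ 1) :
    ‖deriv (pottsBetheMap k θ q) 1‖ = ‖(k : K)‖ := by
  have norm_θ_ne_zero : ‖θ‖ ≠ 0 := (zero_lt_one.trans hθ).ne'
  have den_eq : 1 + θ + q - 1 = θ + q := by ring
  have norm_θ_add_q : ‖θ + q‖ = ‖θ‖ := norm_add_eq_left_of_norm_lt (hq.trans_lt hθ)
  have den_ne_zero : 1 + θ + q - 1 ≠ 0 := by
    rwa [den_eq, ← norm_ne_zero_iff, norm_θ_add_q]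
  rw [norm_deriv_pottsBetheMap hθ hq den_ne_zero, den_eq, mul_one, norm_θ_add_q,
    div_self norm_θ_ne_zero, one_pow, one_pow, mul_one, mul_one]

theorem norm_deriv_pottsBetheMap_of_norm_lt_norm (hθ : 1 < ‖θ‖) (hq : ‖q‖ ≤ 1)
    (hx : ‖θ‖ < ‖x‖) :
    ‖deriv (pottsBetheMap k θ q) x‖ = ‖(k : K)‖ * ‖θ‖ ^ (k - 1) * (‖θ‖ / ‖x‖) ^ 2 := by
  have norm_x_pos : 0 < ‖x‖ := (norm_nonneg θ).trans_lt hx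
  have norm_den : ‖x + θ + q - 1‖ = ‖x‖ := by
    rw [show x + θ + q - 1 = x + (θ + (q - 1)) by ring]
    exact norm_add_eq_left_of_norm_lt (by rwa [norm_add_sub_one_of_one_lt_norm hθ hq])
  have norm_num : ‖θ * x + q‖ = ‖θ‖ * ‖x‖ := by
    rw [← norm_mul]
    refine norm_add_eq_left_of_norm_lt (hq.trans_lt ?_)
    rw [norm_mul]
    exact one_lt_mul_of_lt_of_le hθ (hθ.trans hx).le
  have den_ne_zero : x + θ + q - 1 ≠ 0 := norm_pos_iff.1 (norm_den ▸ norm_x_pos)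
  rw [norm_deriv_pottsBetheMap hθ hq den_ne_zero, norm_num, norm_den,
    mul_div_cancel_right₀ _ norm_x_pos.ne']

theorem norm_deriv_pottsBetheMap_of_norm_lt_div (hθ : 1 < ‖θ‖) (hq : ‖q‖ ≤ 1)
    (hx : ‖x‖ < ‖q‖ / ‖θ‖) :
    ‖deriv (pottsBetheMap k θ q) x‖ = ‖(k : K)‖ * (‖q‖ / ‖θ‖) ^ (k - 1) := by
  have norm_θ_pos : 0 < ‖θ‖ := zero_lt_one.trans hθ
  have norm_θ_mul_x_lt : ‖θ * x‖ < ‖q‖ := by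
    rwa [norm_mul, mul_comm, ← lt_div_iff₀ norm_θ_pos]
  have norm_x_lt : ‖x‖ < ‖θ‖ :=
    hx.trans <| (div_le_self (norm_nonneg q) hθ.le).trans_lt (hq.trans_lt hθ)
  have norm_num : ‖θ * x + q‖ = ‖q‖ := by
    rw [add_comm, norm_add_eq_left_of_norm_lt norm_θ_mul_x_lt]
  have norm_den : ‖x + θ + q - 1‖ = ‖θ‖ := by
    have norm_θ_add := norm_add_sub_one_of_one_lt_norm hθ hq
    rw [show x + θ + q - 1 = θ + (q - 1) + x by ring,
      norm_add_eq_left_of_norm_lt (by rwa [norm_θ_add]), norm_θ_add]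
  have den_ne_zero : x + θ + q - 1 ≠ 0 := norm_pos_iff.1 (norm_den ▸ norm_θ_pos)
  rw [norm_deriv_pottsBetheMap hθ hq den_ne_zero, norm_num, norm_den, div_self norm_θ_pos.ne',
    one_pow, mul_one]

theorem norm_deriv_pottsBetheMap_of_norm_eq_pow (hk : 2 ≤ k) (hθ : 1 < ‖θ‖) (hq : ‖q‖ ≤ 1)
    (hx : ‖x‖ = ‖θ‖ ^ k) :
    ‖deriv (pottsBetheMap k θ q) x‖ = ‖(k : K)‖ * ‖θ‖⁻¹ ^ (k - 1) := by
  have norm_θ_lt_norm_x : ‖θ‖ < ‖x‖ := hx ▸ lt_self_pow₀ hθ hk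
  rw [norm_deriv_pottsBetheMap_of_norm_lt_norm hθ hq norm_θ_lt_norm_x, hx]
  obtain ⟨n, rfl⟩ := Nat.exists_eq_add_of_le' (one_le_two.trans hk)
  rw [Nat.add_sub_cancel, inv_pow]
  field_simp
  ring

theorem norm_deriv_pottsBetheMap_of_norm_eq_div_pow (hk : 2 ≤ k) (hθ : 1 < ‖θ‖) (hq₀ : q ≠ 0)
    (hq : ‖q‖ ≤ 1) (hx : ‖x‖ = (‖q‖ / ‖θ‖) ^ k) :
    ‖deriv (pottsBetheMap k θ q) x‖ = ‖(k : K)‖ * (‖q‖ / ‖θ‖) ^ (k - 1) := by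
  have norm_θ_pos : 0 < ‖θ‖ := zero_lt_one.trans hθ
  have ratio_lt_one : ‖q‖ / ‖θ‖ < 1 := (div_lt_one norm_θ_pos).2 (hq.trans_lt hθ)
  have norm_x_lt : ‖x‖ < ‖q‖ / ‖θ‖ :=
    hx ▸ pow_lt_self_of_lt_one₀ (div_pos (norm_pos_iff.2 hq₀) norm_θ_pos) ratio_lt_one hk
  exact norm_deriv_pottsBetheMap_of_norm_lt_div hθ hq norm_x_lt

theorem stmt_14_general (hk : 2 ≤ k) (hθ : 1 < ‖θ‖) (hq₀ : q ≠ 0) (hq : ‖q‖ ≤ 1) {x₁ x₂ : K}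
    (hx₁ : ‖x₁‖ = ‖θ‖ ^ k) (hx₂ : ‖x₂‖ = (‖q‖ / ‖θ‖) ^ k) :
    ‖deriv (pottsBetheMap k θ q) 1‖ = ‖(k : K)‖ ∧
    (‖deriv (pottsBetheMap k θ q) x₁‖ = ‖(k : K)‖ * ‖θ‖⁻¹ ^ (k - 1) ∧
      ‖deriv (pottsBetheMap k θ q) x₁‖ < 1) ∧
    (‖deriv (pottsBetheMap k θ q) x₂‖ = ‖(k : K)‖ * (‖q‖ / ‖θ‖) ^ (k - 1) ∧
      ‖deriv (pottsBetheMap k θ q) x₂‖ < 1) := by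
  have norm_deriv_x₁ := norm_deriv_pottsBetheMap_of_norm_eq_pow hk hθ hq hx₁
  have norm_deriv_x₂ := norm_deriv_pottsBetheMap_of_norm_eq_div_pow hk hθ hq₀ hq hx₂
  have norm_θ_pos : 0 < ‖θ‖ := zero_lt_one.trans hθ
  have ratio_lt_one : ‖q‖ / ‖θ‖ < 1 := (div_lt_one norm_θ_pos).2 (hq.trans_lt hθ)
  refine ⟨norm_deriv_pottsBetheMap_one hθ hq, ⟨norm_deriv_x₁, ?_⟩, norm_deriv_x₂, ?_⟩
  · rw [norm_deriv_x₁]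
    exact norm_natCast_mul_pow_lt_one K k (by lia) (by positivity) (inv_lt_one_of_one_lt₀ hθ)
  · rw [norm_deriv_x₂]
    exact norm_natCast_mul_pow_lt_one K k (by lia) (by positivity) ratio_lt_one

end PottsBethe

theorem padic_norm_two_eq_one {p : ℕ} [hp : Fact p.Prime] (hp2 : p ≠ 2) : ‖(2 : ℚ_[p])‖ = 1 :=
  Padic.norm_natCast_eq_one_iff.2 ((Nat.coprime_primes hp.out Nat.prime_two).2 hp2)

theorem one_lt_padic_norm_inv_prime_pow (p : ℕ) [hp : Fact p.Prime] {M : ℕ} (hM : M ≠ 0) :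
    1 < ‖((p : ℚ_[p]) ^ M)⁻¹‖ := by
  rw [norm_inv, Padic.norm_p_pow, zpow_neg, inv_inv, zpow_natCast]
  exact one_lt_pow₀ (mod_cast hp.out.one_lt) hM

theorem stmt_14 (p : ℕ) [Fact p.Prime] (hp2 : p ≠ 2)
    (q : ℕ) (hq : 1 ≤ q) (M : ℕ) (hM : 1 ≤ M)
    (θ : ℚ_[p]) (hθ : θ = ((p : ℚ_[p]) ^ M)⁻¹)
    (x₁ x₂ : ℚ_[p])
    (h₁ : x₁ ^ 2 + (2 * θ - θ ^ 2 + 2 * q - 1) * x₁ + q ^ 2 = 0)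
    (h₂ : x₂ ^ 2 + (2 * θ - θ ^ 2 + 2 * q - 1) * x₂ + q ^ 2 = 0)
    (hn₁ : ‖x₁‖ = ‖θ‖ ^ 2) (hn₂ : ‖x₂‖ = (‖(q : ℚ_[p])‖ / ‖θ‖) ^ 2)
    (f : ℚ_[p] → ℚ_[p])
    (hf : f = fun x => ((θ * x + q) / (x + θ + q - 1)) ^ 2) :
    ‖deriv f 1‖ = 1 ∧
    (‖deriv f x₁‖ = ‖θ‖⁻¹ ∧ ‖deriv f x₁‖ < 1) ∧
    (‖deriv f x₂‖ = ‖(q : ℚ_[p])‖ / ‖θ‖ ∧ ‖deriv f x₂‖ < 1) := by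
  obtain rfl : f = pottsBetheMap 2 θ q := hf
  have one_lt_norm_θ : 1 < ‖θ‖ := hθ ▸ one_lt_padic_norm_inv_prime_pow p (by lia)
  have q_ne_zero : (q : ℚ_[p]) ≠ 0 := Nat.cast_ne_zero.2 (by lia)
  have norm_q_le_one : ‖(q : ℚ_[p])‖ ≤ 1 := IsUltrametricDist.norm_natCast_le_one _ q
  simpa [padic_norm_two_eq_one hp2] using
    stmt_14_general le_rfl one_lt_norm_θ q_ne_zero norm_q_le_one hn₁ hn₂
end
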